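/- Let 𝒜 = ((a_{N,n})_{N∈ℕ})_{n∈ℕ} be a double sequence of weights on 𝔻 with a_{N,n+1} ≤ a_{N,n} ≤ a_{N+1,n} pointwise, satisfying condition (LOG). Then the equality of sets ⋂_N ⋃_n Ha_{N,n}(𝔻) = ⋃_n ⋂_N Ha_{N,n}(𝔻) holds (i.e. AH(𝔻) = 𝒱H(𝔻) algebraically) if and only if 𝒜 satisfies condition (B)~. -/

import Mathlib

noncomputable section

open Complex

/-- The open unit disc in ℂ. -/
def uD : Set ℂ := {z : ℂ | ‖z‖ < 1}

/-- Holomorphic on the unit disc. -/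
def Holo (f : ℂ → ℂ) : Prop := DifferentiableOn ℂ f uD

/-- A weight on 𝔻: continuous and strictly positive. -/
def IsWeight (v : ℂ → ℝ) : Prop :=
  ContinuousOn v uD ∧ ∀ z ∈ uD, 0 < v z

/-- Radial weight. -/
def Radial (v : ℂ → ℝ) : Prop :=
  ∀ z ∈ uD, ∀ w ∈ uD, ‖z‖ = ‖w‖ → v z = v w

/-- Non-increasing in the modulus. -/
def NonInc (v : ℂ → ℝ) : Prop :=
  ∀ z ∈ uD, ∀ w ∈ uD, ‖z‖ ≤ ‖w‖ → v w ≤ v z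

/-- r₀ = 0, r_κ = 1 - 2^(-2^κ) for κ ≥ 1. -/
def rseq (κ : ℕ) : ℝ := if κ = 0 then 0 else 1 - 1 / 2 ^ (2 ^ κ)

/-- Condition (LOG 1) for a single radial weight. -/
def Log1 (A : ℝ) (v : ℂ → ℝ) : Prop :=
  ∀ κ : ℕ, v (rseq κ : ℂ) ≤ A * v (rseq (κ + 1) : ℂ)

/-- Condition (LOG 2) for a single radial weight. -/
def Log2 (a : ℝ) (v : ℂ → ℝ) : Prop :=
  ∀ κ : ℕ, v (rseq (κ + 1) : ℂ) ≤ a * v (rseq κ : ℂ)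

/-- The weight tends to 0 as |z| → 1. -/
def VanishAtOne (v : ℂ → ℝ) : Prop :=
  ∀ ε > 0, ∃ r : ℝ, r < 1 ∧ ∀ z ∈ uD, r ≤ ‖z‖ → v z ≤ ε

/-- Associated growth function w~ of a growth condition w. -/
def growthTilde (w : ℂ → ℝ) (z : ℂ) : ℝ :=
  sSup {t : ℝ | ∃ g : ℂ → ℂ, Holo g ∧ (∀ x ∈ uD, ‖g x‖ ≤ w x) ∧ t = ‖g z‖}

/-- Associated weight ṽ = 1/(1/v)~. -/
def assocWeight (v : ℂ → ℝ) (z : ℂ) : ℝ := (growthTilde (fun x => 1 / v x) z)⁻¹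

/-- Monotonicity of the double sequence: decreasing in n, increasing in N. -/
def MonoSeq (a : ℕ → ℕ → ℂ → ℝ) : Prop :=
  ∀ N n, ∀ z ∈ uD, a N (n + 1) z ≤ a N n z ∧ a N n z ≤ a (N + 1) n z

/-- Condition (LOG) for a double sequence with constants 0 < a < 1 < A. -/
def SeqLOG (aa A : ℝ) (a : ℕ → ℕ → ℂ → ℝ) : Prop :=
  ∀ N n, Radial (a N n) ∧ NonInc (a N n) ∧ VanishAtOne (a N n) ∧
    Log1 A (a N n) ∧ Log2 aa (a N n)

/-- Condition (Q). -/
def CondQ (a : ℕ → ℕ → ℂ → ℝ) : Prop :=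
  ∀ N, ∃ M ≥ N, ∃ n, ∀ K ≥ M, ∀ m, ∀ ε > 0, ∃ k, ∃ S > 0,
    ∀ z ∈ uD, 1 / a M m z ≤ max (ε / a N n z) (S / a K k z)

/-- Condition (wQ). -/
def CondwQ (a : ℕ → ℕ → ℂ → ℝ) : Prop :=
  ∀ N, ∃ M ≥ N, ∃ n, ∀ K ≥ M, ∀ m, ∃ k, ∃ S > 0,
    ∀ z ∈ uD, 1 / a M m z ≤ max (S / a N n z) (S / a K k z)

/-- Condition (Q)~. -/
def CondQTilde (a : ℕ → ℕ → ℂ → ℝ) : Prop :=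
  ∀ N, ∃ M ≥ N, ∃ n, ∀ K ≥ M, ∀ m, ∀ ε > 0, ∃ k, ∃ S > 0,
    ∀ z ∈ uD, growthTilde (fun x => 1 / a M m x) z ≤
      growthTilde (fun x => max (ε / a N n x) (S / a K k x)) z

/-- Pointwise maximum max_{N=1,…,L} a_{N,n(N)}. -/
def finMax (a : ℕ → ℕ → ℂ → ℝ) (nn : ℕ → ℕ) (L : ℕ) (z : ℂ) : ℝ :=
  sSup {t : ℝ | ∃ N, 1 ≤ N ∧ N ≤ L ∧ t = a N (nn N) z}

/-- Condition (B). -/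
def CondB (a : ℕ → ℕ → ℂ → ℝ) : Prop :=
  ∀ nn : ℕ → ℕ, ∃ m, ∀ M, ∃ L, 1 ≤ L ∧ ∃ c > 0,
    ∀ z ∈ uD, a M m z ≤ c * finMax a nn L z

/-- Condition (B)~. -/
def CondBTilde (a : ℕ → ℕ → ℂ → ℝ) : Prop :=
  ∀ nn : ℕ → ℕ, ∃ m, ∀ M, ∃ L, 1 ≤ L ∧ ∃ c > 0,
    ∀ z ∈ uD, assocWeight (a M m) z ≤ c * assocWeight (finMax a nn L) z

/-- A weight is essential. -/
def Essential (v : ℂ → ℝ) : Prop :=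
  ∃ C > 0, ∀ z ∈ uD,
    growthTilde (fun x => 1 / v x) z ≤ 1 / v z ∧
    1 / v z ≤ C * growthTilde (fun x => 1 / v x) z

/-- Condition (Σ). -/
def CondSigma (a : ℕ → ℕ → ℂ → ℝ) : Prop :=
  ∀ N, ∃ K ≥ N, ∀ k, ∃ n ≥ k, ∀ ε > 0, ∃ Q : Set ℂ,
    IsCompact Q ∧ Q ⊆ uD ∧ ∀ z ∈ uD \ Q, a N n z / a K k z ≤ ε

/-- The Banach space Ha(𝔻) as a set of functions. -/
def HaSet (v : ℂ → ℝ) : Set (ℂ → ℂ) :=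
  {f | Holo f ∧ ∃ C : ℝ, ∀ z ∈ uD, v z * ‖f z‖ ≤ C}

/-- The exponents of the lacunary series. -/
def lacExp (k : ℕ) : ℕ := if k = 0 then 0 else 2 ^ (2 ^ k)

theorem rseq_nonneg (k : ℕ) : 0 ≤ rseq k := by
  unfold rseq
  split_ifs
  · exact le_rfl
  · have : (1 : ℝ) ≤ 2 ^ (2 ^ k) := one_le_pow₀ (by norm_num)
    have := (div_le_one (by positivity : (0 : ℝ) < 2 ^ (2 ^ k))).2 this
    linarith

theorem rseq_lt_one (k : ℕ) : rseq k < 1 := by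
  unfold rseq
  split_ifs
  · norm_num
  · have : (0 : ℝ) < 1 / 2 ^ (2 ^ k) := by positivity
    linarith

theorem rseq_succ (k : ℕ) : rseq (k + 1) = 1 - 1 / 2 ^ (2 ^ (k + 1)) := by
  simp [rseq]

theorem rseq_mono : Monotone rseq := by
  apply monotone_nat_of_le_succ
  intro k
  rcases Nat.eq_zero_or_pos k with rfl | hk
  · have : rseq 0 = 0 := by simp [rseq]
    rw [this]; exact rseq_nonneg _
  · rw [rseq_succ]
    unfold rseq
    rw [if_neg hk.ne']
    have h : (2 : ℝ) ^ (2 ^ k) ≤ 2 ^ (2 ^ (k + 1)) :=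
      pow_le_pow_right₀ (by norm_num) (Nat.pow_le_pow_right (by norm_num) (by omega))
    have := one_div_le_one_div_of_le (by positivity) h
    linarith

theorem exists_block (x : ℝ) (h0 : 0 ≤ x) (h1 : x < 1) :
    ∃ k, rseq k ≤ x ∧ x < rseq (k + 1) := by
  have hex : ∃ k, x < rseq k := by
    obtain ⟨n, hn⟩ := exists_pow_lt_of_lt_one (sub_pos.2 h1) (by norm_num : (1 / 2 : ℝ) < 1)
    refine ⟨n + 1, ?_⟩
    rw [rseq_succ]
    have h2 : n ≤ 2 ^ (n + 1) := by
      have := @Nat.lt_two_pow_self (n + 1)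
      omega
    have h3 : (1 / 2 : ℝ) ^ (2 ^ (n + 1)) ≤ (1 / 2) ^ n :=
      pow_le_pow_of_le_one (by norm_num) (by norm_num) h2
    rw [one_div_pow] at h3
    linarith
  classical
  have hs := Nat.find_spec hex
  have hm := fun m => @Nat.find_min _ _ hex m
  generalize Nat.find hex = k at hs hm
  cases k with
  | zero =>
    have : rseq 0 = 0 := by simp [rseq]
    linarith
  | succ k =>
    exact ⟨k, not_lt.1 (hm k (Nat.lt_succ_self k)), hs⟩

theorem norm_rseq (k : ℕ) : ‖(rseq k : ℂ)‖ = rseq k := by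
  rw [Complex.norm_real, Real.norm_of_nonneg (rseq_nonneg k)]

theorem rseq_mem (k : ℕ) : (rseq k : ℂ) ∈ uD := by
  show ‖(rseq k : ℂ)‖ < 1
  rw [norm_rseq]; exact rseq_lt_one k

theorem lac_lower (k : ℕ) : 1 / 4 ≤ rseq k ^ lacExp k := by
  unfold rseq lacExp
  split_ifs with h
  · norm_num
  · obtain ⟨p, hp⟩ : ∃ p, 2 ^ k = p + 1 := ⟨2 ^ k - 1, by have := Nat.one_le_two_pow (n := k); omega⟩
    have hq : (2 : ℕ) ^ (2 ^ k) = 2 * 2 ^ p := by rw [hp, pow_succ]; ring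
    have hq' : (2 : ℝ) ^ (2 ^ k) = 2 * 2 ^ p := by rw [hp, pow_succ]; ring
    rw [hq, hq', mul_comm 2 (2 ^ p : ℕ), pow_mul]
    have hpp : (1 : ℝ) ≤ 2 ^ p := one_le_pow₀ (by norm_num)
    have hle : 1 / (2 * 2 ^ p : ℝ) ≤ 1 := by
      rw [div_le_one (by positivity)]; linarith
    have hb := one_add_mul_le_pow (a := -(1 / (2 * 2 ^ p : ℝ))) (by linarith) (2 ^ p)
    have he : 1 + ((2 ^ p : ℕ) : ℝ) * -(1 / (2 * 2 ^ p : ℝ)) = 1 / 2 := by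
      push_cast; field_simp; norm_num
    rw [he, ← sub_eq_add_neg] at hb
    nlinarith

theorem lac_upper (x : ℝ) (hx : 0 ≤ x) (κ k : ℕ) (hk : κ < k) (h : x ≤ rseq (κ + 1)) :
    x ^ lacExp k ≤ Real.exp (-(2 ^ (k - κ) / 2)) := by
  obtain ⟨d, rfl⟩ : ∃ d, k = κ + 1 + d := ⟨k - κ - 1, by omega⟩
  have hd : κ + 1 + d - κ = d + 1 := by omega
  rw [hd]
  have h1 : x ≤ Real.exp (-(1 / 2 ^ (2 ^ (κ + 1)))) := by
    have := Real.add_one_le_exp (-(1 / 2 ^ (2 ^ (κ + 1)) : ℝ))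
    rw [rseq_succ] at h
    linarith
  have h2 := pow_le_pow_left₀ hx h1 (lacExp (κ + 1 + d))
  refine h2.trans ?_
  rw [← Real.exp_nat_mul, Real.exp_le_exp]
  have h3 : lacExp (κ + 1 + d) = 2 ^ (2 ^ (κ + 1 + d)) := by simp [lacExp]
  rw [h3]
  have h4 : 2 ^ (κ + 1) + d ≤ 2 ^ (κ + 1 + d) := by
    have e1 : d + 1 ≤ 2 ^ d := Nat.lt_two_pow_self
    have e2 : 1 ≤ 2 ^ (κ + 1) := Nat.one_le_two_pow
    rw [pow_add 2 (κ + 1) d]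
    nlinarith
  have h5 : (2 : ℝ) ^ (2 ^ (κ + 1)) * 2 ^ d ≤ 2 ^ (2 ^ (κ + 1 + d)) := by
    rw [← pow_add]; exact pow_le_pow_right₀ (by norm_num) h4
  have h6 : (2 : ℝ) ^ d ≤ 2 ^ (2 ^ (κ + 1 + d)) * (1 / 2 ^ (2 ^ (κ + 1))) := by
    rw [mul_one_div, le_div_iff₀ (by positivity)]; linarith
  push_cast
  have h7 : (2 : ℝ) ^ (d + 1) / 2 = 2 ^ d := by rw [pow_succ]; ring
  rw [h7]
  linarith

theorem summ_G (A : ℝ) (hA : 1 < A) :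
    Summable (fun i : ℕ => A ^ i * Real.exp (-(2 ^ i / 2))) := by
  apply summable_of_ratio_test_tendsto_lt_one (l := 0) one_pos
  · exact Filter.Eventually.of_forall fun i => by positivity
  · have he : ∀ i : ℕ, ‖A ^ (i + 1) * Real.exp (-(2 ^ (i + 1) / 2))‖ /
        ‖A ^ i * Real.exp (-(2 ^ i / 2))‖ = A * Real.exp (-(2 ^ i / 2)) := by
      intro i
      have hp : 0 < A ^ i := by positivity
      rw [Real.norm_of_nonneg (by positivity), Real.norm_of_nonneg (by positivity)]
      rw [div_eq_iff (by positivity)]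
      have : Real.exp (-(2 ^ (i + 1) / 2)) = Real.exp (-(2 ^ i / 2)) * Real.exp (-(2 ^ i / 2)) := by
        rw [← Real.exp_add]; congr 1; rw [pow_succ]; ring
      rw [this, pow_succ]; ring
    simp_rw [he]
    have h1 : Filter.Tendsto (fun i : ℕ => (2 : ℝ) ^ i / 2) Filter.atTop Filter.atTop :=
      (tendsto_pow_atTop_atTop_of_one_lt (by norm_num)).atTop_div_const (by norm_num)
    have h2 := (Real.tendsto_exp_neg_atTop_nhds_zero.comp h1).const_mul A
    simpa using h2

theorem log1_iter {A : ℝ} (hA : 1 < A) {v : ℂ → ℝ} (h : Log1 A v) (k d : ℕ) :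
    v (rseq k : ℂ) ≤ A ^ d * v (rseq (k + d) : ℂ) := by
  induction d with
  | zero => simp
  | succ d ih =>
    refine ih.trans ?_
    have := mul_le_mul_of_nonneg_left (h (k + d)) (by positivity : 0 ≤ A ^ d)
    rw [pow_succ, mul_assoc]; exact this

theorem log2_iter {a' : ℝ} (h0 : 0 < a') {v : ℂ → ℝ} (h : Log2 a' v) (k d : ℕ) :
    v (rseq (k + d) : ℂ) ≤ a' ^ d * v (rseq k : ℂ) := by
  induction d with
  | zero => simp
  | succ d ih =>
    refine (h (k + d)).trans ?_
    have := mul_le_mul_of_nonneg_left ih h0.le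
    rw [pow_succ]; linarith

/-- A weight (positive and non-increasing) satisfying the two (LOG) inequalities. -/
def Good (a' A : ℝ) (v : ℂ → ℝ) : Prop :=
  (∀ z ∈ uD, 0 < v z) ∧ NonInc v ∧ Log1 A v ∧ Log2 a' v

theorem core_bound (a' A : ℝ) (ha0 : 0 < a') (ha1 : a' < 1) (hA : 1 < A) :
    ∃ B > 0, ∀ v, Good a' A v → ∀ s : Finset ℕ, ∀ z ∈ uD,
      ∑ k ∈ s, v z * (‖z‖ ^ lacExp k / v (rseq k : ℂ)) ≤ B := by
  have hs1 : Summable (fun i : ℕ => a' ^ i) := summable_geometric_of_lt_one ha0.le ha1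
  have hs2 := summ_G A hA
  refine ⟨(∑' i : ℕ, a' ^ i) + ∑' i : ℕ, A ^ i * Real.exp (-(2 ^ i / 2)) + 1, ?_, ?_⟩
  · have h1 : 0 ≤ ∑' i : ℕ, a' ^ i := tsum_nonneg fun i => by positivity
    have h2 : 0 ≤ ∑' i : ℕ, A ^ i * Real.exp (-(2 ^ i / 2)) := tsum_nonneg fun i => by positivity
    linarith
  · rintro v ⟨hpos, hni, hl1, hl2⟩ s z hz
    obtain ⟨κ, hκ1, hκ2⟩ := exists_block ‖z‖ (norm_nonneg z) hz
    have hvz : v z ≤ v (rseq κ : ℂ) := hni _ (rseq_mem κ) _ hz (by rw [norm_rseq]; exact hκ1)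
    have hz1 : ‖z‖ ≤ 1 := le_of_lt hz
    have t1 : ∀ k ∈ s.filter (fun k => k ≤ κ),
        v z * (‖z‖ ^ lacExp k / v (rseq k : ℂ)) ≤ a' ^ (κ - k) := by
      intro k hk
      have hk' : k ≤ κ := (Finset.mem_filter.1 hk).2
      have := log2_iter ha0 hl2 k (κ - k)
      rw [Nat.add_sub_cancel' hk'] at this
      rw [← mul_div_assoc, div_le_iff₀ (hpos _ (rseq_mem k))]
      have hp := pow_le_one₀ (n := lacExp k) (norm_nonneg z) hz1
      calc v z * ‖z‖ ^ lacExp k ≤ v z * 1 := mul_le_mul_of_nonneg_left hp (hpos z hz).le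
        _ ≤ _ := by linarith
    have t2 : ∀ k ∈ s.filter (fun k => ¬ k ≤ κ),
        v z * (‖z‖ ^ lacExp k / v (rseq k : ℂ)) ≤
          A ^ (k - κ) * Real.exp (-(2 ^ (k - κ) / 2)) := by
      intro k hk
      have hk' : κ < k := not_le.1 (Finset.mem_filter.1 hk).2
      have := log1_iter hA hl1 κ (k - κ)
      rw [Nat.add_sub_cancel' hk'.le] at this
      rw [← mul_div_assoc, div_le_iff₀ (hpos _ (rseq_mem k))]
      have hp := lac_upper ‖z‖ (norm_nonneg z) κ k hk' hκ2.le
      calc v z * ‖z‖ ^ lacExp k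
          ≤ (A ^ (k - κ) * v (rseq k : ℂ)) * Real.exp (-(2 ^ (k - κ) / 2)) :=
            mul_le_mul (hvz.trans this) hp (by positivity)
              (mul_nonneg (by positivity) (hpos _ (rseq_mem k)).le)
        _ = _ := by ring
    rw [← Finset.sum_filter_add_sum_filter_not s (fun k => k ≤ κ)]
    have u1 : ∑ k ∈ s.filter (fun k => k ≤ κ), a' ^ (κ - k) ≤ ∑' i : ℕ, a' ^ i := by
      rw [← Finset.sum_image (f := fun i => a' ^ i) (g := fun k => κ - k)
        (s := s.filter (fun k => k ≤ κ))]
      · exact hs1.sum_le_tsum _ (fun i _ => by positivity)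
      · intro x hx y hy hxy
        have := (Finset.mem_filter.1 hx).2
        have := (Finset.mem_filter.1 hy).2
        dsimp only at hxy
        omega
    have u2 : ∑ k ∈ s.filter (fun k => ¬ k ≤ κ), A ^ (k - κ) * Real.exp (-(2 ^ (k - κ) / 2)) ≤
        ∑' i : ℕ, A ^ i * Real.exp (-(2 ^ i / 2)) := by
      rw [← Finset.sum_image (f := fun i => A ^ i * Real.exp (-(2 ^ i / 2))) (g := fun k => k - κ)
        (s := s.filter (fun k => ¬ k ≤ κ))]
      · exact hs2.sum_le_tsum _ (fun i _ => by positivity)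
      · intro x hx y hy hxy
        have := (Finset.mem_filter.1 hx).2
        have := (Finset.mem_filter.1 hy).2
        dsimp only at hxy
        omega
    have := Finset.sum_le_sum t1
    have := Finset.sum_le_sum t2
    linarith

theorem zero_mem_uD : (0 : ℂ) ∈ uD := by simp [uD]

theorem growth_bdd {w : ℂ → ℝ} {z : ℂ} (hz : z ∈ uD) :
    BddAbove {t : ℝ | ∃ g : ℂ → ℂ, Holo g ∧ (∀ x ∈ uD, ‖g x‖ ≤ w x) ∧ t = ‖g z‖} :=
  ⟨w z, by rintro t ⟨g, -, hg, rfl⟩; exact hg z hz⟩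

theorem le_growth {w : ℂ → ℝ} {z : ℂ} (hz : z ∈ uD) {g : ℂ → ℂ} (hg : Holo g)
    (h : ∀ x ∈ uD, ‖g x‖ ≤ w x) : ‖g z‖ ≤ growthTilde w z :=
  le_csSup (growth_bdd hz) ⟨g, hg, h, rfl⟩

theorem growth_pos {v : ℂ → ℝ} (hpos : ∀ z ∈ uD, 0 < v z) (hni : NonInc v) {z : ℂ}
    (hz : z ∈ uD) : 0 < growthTilde (fun x => 1 / v x) z := by
  have h0 := hpos 0 zero_mem_uD
  have := le_growth (w := fun x => 1 / v x) hz (g := fun _ => ((1 / v 0 : ℝ) : ℂ))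
    (differentiableOn_const _) (by
      intro x hx
      rw [Complex.norm_real, Real.norm_of_nonneg (by positivity)]
      exact one_div_le_one_div_of_le (hpos x hx) (hni _ zero_mem_uD _ hx (by simp)))
  rw [Complex.norm_real, Real.norm_of_nonneg (by positivity)] at this
  exact lt_of_lt_of_le (by positivity) this

theorem le_assoc {v : ℂ → ℝ} (hpos : ∀ z ∈ uD, 0 < v z) (hni : NonInc v) {z : ℂ}
    (hz : z ∈ uD) : v z ≤ assocWeight v z := by
  unfold assocWeight
  have h := growth_pos hpos hni hz
  rw [le_inv_comm₀ (hpos z hz) h, ← one_div]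
  refine csSup_le ?_ ?_
  · refine ⟨_, fun _ => 0, differentiableOn_const _, ?_, rfl⟩
    intro x hx
    have := hpos x hx
    simp [this.le]
  · rintro t ⟨g, -, hg, rfl⟩
    exact hg z hz

theorem assoc_le (a' A B : ℝ) (hA : 1 < A) (hB : 0 < B)
    (hcore : ∀ v, Good a' A v → ∀ s : Finset ℕ, ∀ z ∈ uD,
      ∑ k ∈ s, v z * (‖z‖ ^ lacExp k / v (rseq k : ℂ)) ≤ B)
    {v : ℂ → ℝ} (hv : Good a' A v) {z : ℂ} (hz : z ∈ uD) :
    assocWeight v z ≤ 4 * A * B * v z := by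
  obtain ⟨κ, hκ1, hκ2⟩ := exists_block ‖z‖ (norm_nonneg z) hz
  have hr := hv.1 _ (rseq_mem κ)
  have hr' := hv.1 _ (rseq_mem (κ + 1))
  have hvz := hv.1 z hz
  have key : ‖((1 / (B * v (rseq κ : ℂ)) : ℝ) : ℂ) * z ^ lacExp κ‖ ≤
      growthTilde (fun x => 1 / v x) z := by
    refine le_growth (w := fun x => 1 / v x)
      (g := fun x => ((1 / (B * v (rseq κ : ℂ)) : ℝ) : ℂ) * x ^ lacExp κ) hz ?_ ?_
    · exact ((differentiable_pow _).const_mul _).differentiableOn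
    · intro x hx
      have hc := hcore v hv {κ} x hx
      have hvx := hv.1 x hx
      rw [Finset.sum_singleton] at hc
      rw [norm_mul, Complex.norm_real, Real.norm_of_nonneg (by positivity), norm_pow,
        le_div_iff₀ hvx]
      have : 1 / (B * v (rseq κ : ℂ)) * ‖x‖ ^ lacExp κ * v x =
        (v x * (‖x‖ ^ lacExp κ / v (rseq κ : ℂ))) / B := by field_simp
      rw [this, div_le_one hB]; exact hc
  rw [norm_mul, Complex.norm_real, Real.norm_of_nonneg (by positivity), norm_pow] at key
  have hlow : 1 / 4 ≤ ‖z‖ ^ lacExp κ :=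
    (lac_lower κ).trans (pow_le_pow_left₀ (rseq_nonneg κ) hκ1 _)
  have h1 : v (rseq κ : ℂ) ≤ A * v z := by
    refine (hv.2.2.1 κ).trans (mul_le_mul_of_nonneg_left ?_ (by linarith))
    exact hv.2.1 _ hz _ (rseq_mem _) (by rw [norm_rseq]; exact hκ2.le)
  unfold assocWeight
  have hP : 0 < 4 * A * B * v z := by positivity
  refine inv_le_of_inv_le₀ hP (le_trans ?_ key)
  have h2 : 1 / (B * (A * v z)) ≤ 1 / (B * v (rseq κ : ℂ)) :=
    one_div_le_one_div_of_le (by positivity) (mul_le_mul_of_nonneg_left h1 hB.le)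
  calc (4 * A * B * v z)⁻¹ = 1 / (B * (A * v z)) * (1 / 4) := by field_simp
    _ ≤ _ := mul_le_mul h2 hlow (by norm_num) (by positivity)

theorem finMax_finite (a : ℕ → ℕ → ℂ → ℝ) (nn : ℕ → ℕ) (L : ℕ) (z : ℂ) :
    BddAbove {t : ℝ | ∃ N, 1 ≤ N ∧ N ≤ L ∧ t = a N (nn N) z} := by
  have : {t : ℝ | ∃ N, 1 ≤ N ∧ N ≤ L ∧ t = a N (nn N) z} ⊆
      (fun N => a N (nn N) z) '' (Set.Icc 1 L) := by
    rintro t ⟨N, h1, h2, rfl⟩; exact ⟨N, ⟨h1, h2⟩, rfl⟩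
  exact (((Set.finite_Icc 1 L).image _).subset this).bddAbove

theorem le_finMax (a : ℕ → ℕ → ℂ → ℝ) (nn : ℕ → ℕ) (L : ℕ) (z : ℂ) {N : ℕ} (h1 : 1 ≤ N)
    (h2 : N ≤ L) : a N (nn N) z ≤ finMax a nn L z :=
  le_csSup (finMax_finite a nn L z) ⟨N, h1, h2, rfl⟩

theorem finMax_le (a : ℕ → ℕ → ℂ → ℝ) (nn : ℕ → ℕ) (L : ℕ) (hL : 1 ≤ L) (z : ℂ) {t : ℝ}
    (h : ∀ N, 1 ≤ N → N ≤ L → a N (nn N) z ≤ t) : finMax a nn L z ≤ t :=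
  csSup_le ⟨_, 1, le_rfl, hL, rfl⟩ (by rintro _ ⟨N, h1, h2, rfl⟩; exact h N h1 h2)

theorem finMax_pos {a' A : ℝ} {a : ℕ → ℕ → ℂ → ℝ} (hG : ∀ N n, Good a' A (a N n)) (nn : ℕ → ℕ)
    {L : ℕ} (hL : 1 ≤ L) : ∀ z ∈ uD, 0 < finMax a nn L z := fun z hz =>
  lt_of_lt_of_le ((hG 1 (nn 1)).1 z hz) (le_finMax a nn L z le_rfl hL)

theorem finMax_nonInc {a' A : ℝ} {a : ℕ → ℕ → ℂ → ℝ} (hG : ∀ N n, Good a' A (a N n)) (nn : ℕ → ℕ)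
    {L : ℕ} (hL : 1 ≤ L) : NonInc (finMax a nn L) := fun z hz w hw h =>
  finMax_le a nn L hL w fun N h1 h2 =>
    ((hG N (nn N)).2.1 z hz w hw h).trans (le_finMax a nn L z h1 h2)

theorem finMax_log1 {a' A : ℝ} (hA : 1 < A) {a : ℕ → ℕ → ℂ → ℝ}
    (hG : ∀ N n, Good a' A (a N n)) (nn : ℕ → ℕ)
    {L : ℕ} (hL : 1 ≤ L) : Log1 A (finMax a nn L) := fun k =>
  finMax_le a nn L hL _ fun N h1 h2 =>
    ((hG N (nn N)).2.2.1 k).trans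
      (mul_le_mul_of_nonneg_left (le_finMax a nn L _ h1 h2) (by linarith))

/-- An estimate along the tail of the sequence `rseq` gives an estimate on the whole disc. -/
theorem global_of_tail {A : ℝ} (hA : 1 < A) {v w : ℂ → ℝ} (hv : ∀ z ∈ uD, 0 < v z)
    (hvn : NonInc v) (hw : ∀ z ∈ uD, 0 < w z) (hwn : NonInc w) (hwl : Log1 A w)
    {c : ℝ} (hc : 0 < c) (K : ℕ)
    (h : ∀ k, K ≤ k → v (rseq k : ℂ) ≤ c * w (rseq k : ℂ)) :
    ∃ C > 0, ∀ z ∈ uD, v z ≤ C * w z := by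
  have hwK := hw _ (rseq_mem K)
  have hv0 := hv 0 zero_mem_uD
  refine ⟨c * A + v 0 / w (rseq K : ℂ), by positivity, ?_⟩
  intro z hz
  have hwz := hw z hz
  have hP : 0 < v 0 / w (rseq K : ℂ) := by positivity
  by_cases hzK : ‖z‖ < rseq K
  · have h1 : v z ≤ v 0 := hvn _ zero_mem_uD _ hz (by simp)
    have h2 : w (rseq K : ℂ) ≤ w z := hwn _ hz _ (rseq_mem K) (by rw [norm_rseq]; exact hzK.le)
    have h3 : v 0 = v 0 / w (rseq K : ℂ) * w (rseq K : ℂ) := by field_simp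
    have h4 := mul_le_mul_of_nonneg_left h2 hP.le
    have h5 : 0 ≤ c * A * w z := by positivity
    rw [add_mul]; linarith
  · obtain ⟨κ, hκ1, hκ2⟩ := exists_block ‖z‖ (norm_nonneg z) hz
    have hKκ : K ≤ κ := by
      by_contra hcon
      have := rseq_mono (show κ + 1 ≤ K by omega)
      exact hzK (lt_of_lt_of_le hκ2 this)
    have h1 : v z ≤ v (rseq κ : ℂ) := hvn _ (rseq_mem κ) _ hz (by rw [norm_rseq]; exact hκ1)
    have h2 := h κ hKκ
    have h3 := mul_le_mul_of_nonneg_left (hwl κ) hc.le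
    have h4 : w (rseq (κ + 1) : ℂ) ≤ w z :=
      hwn _ hz _ (rseq_mem _) (by rw [norm_rseq]; exact hκ2.le)
    have h5 := mul_le_mul_of_nonneg_left h4 (by positivity : 0 ≤ c * A)
    have h6 : 0 ≤ v 0 / w (rseq K : ℂ) * w z := by positivity
    rw [add_mul]; linarith

/-- Bound for lacunary partial sums. -/
theorem lac_sum_le {a' A B : ℝ}
    (hcore : ∀ v, Good a' A v → ∀ s : Finset ℕ, ∀ z ∈ uD,
      ∑ k ∈ s, v z * (‖z‖ ^ lacExp k / v (rseq k : ℂ)) ≤ B)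
    {v : ℂ → ℝ} (hv : Good a' A v) {φ : ℕ → ℕ} (hφ : Function.Injective φ) {c : ℕ → ℝ} {D : ℝ}
    (hD : 0 ≤ D) (hc : ∀ j, c j * v (rseq (φ j) : ℂ) ≤ D) (s : Finset ℕ) {z : ℂ} (hz : z ∈ uD) :
    v z * ∑ j ∈ s, c j * ‖z‖ ^ lacExp (φ j) ≤ D * B := by
  have h := hcore v hv (s.map ⟨φ, hφ⟩) z hz
  rw [Finset.sum_map] at h
  simp only [Function.Embedding.coeFn_mk] at h
  refine le_trans ?_ (mul_le_mul_of_nonneg_left h hD)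
  rw [Finset.mul_sum, Finset.mul_sum]
  refine Finset.sum_le_sum fun j _ => ?_
  have hr := hv.1 _ (rseq_mem (φ j))
  have hvz := hv.1 z hz
  have h1 : c j ≤ D / v (rseq (φ j) : ℂ) := (le_div_iff₀ hr).2 (hc j)
  have h2 := mul_le_mul_of_nonneg_right h1 (by positivity : 0 ≤ v z * ‖z‖ ^ lacExp (φ j))
  calc v z * (c j * ‖z‖ ^ lacExp (φ j)) = c j * (v z * ‖z‖ ^ lacExp (φ j)) := by ring
    _ ≤ D / v (rseq (φ j) : ℂ) * (v z * ‖z‖ ^ lacExp (φ j)) := h2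
    _ = _ := by ring

theorem Ha_mono {v w : ℂ → ℝ} (h : ∀ z ∈ uD, v z ≤ w z) : HaSet w ⊆ HaSet v := by
  rintro f ⟨hf, C, hC⟩
  exact ⟨hf, C, fun z hz =>
    (mul_le_mul_of_nonneg_right (h z hz) (norm_nonneg _)).trans (hC z hz)⟩

theorem inter_of_B {a' A : ℝ} {a : ℕ → ℕ → ℂ → ℝ} (hG : ∀ N n, Good a' A (a N n))
    (hB : CondBTilde a) :
    (⋂ N : ℕ, ⋃ n : ℕ, HaSet (a N n)) ⊆ (⋃ n : ℕ, ⋂ N : ℕ, HaSet (a N n)) := by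
  intro f hf
  simp only [Set.mem_iInter, Set.mem_iUnion] at hf ⊢
  choose nn hnn using hf
  have hfh : Holo f := (hnn 0).1
  choose C hC using fun N => (hnn N).2
  obtain ⟨m, hm⟩ := hB nn
  refine ⟨m, fun M => ⟨hfh, ?_⟩⟩
  obtain ⟨L, hL, c, hc, h⟩ := hm M
  set D : ℝ := 1 + ∑ N ∈ Finset.range (L + 1), |C N| with hD
  have hDpos : 0 < D := by
    have : 0 ≤ ∑ N ∈ Finset.range (L + 1), |C N| := Finset.sum_nonneg fun _ _ => abs_nonneg _
    linarith
  have hDC : ∀ N ≤ L, C N ≤ D := by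
    intro N hN
    have := Finset.single_le_sum (f := fun N => |C N|) (fun i _ => abs_nonneg (C i))
      (Finset.mem_range.2 (Nat.lt_succ_of_le hN))
    have h2 := le_abs_self (C N)
    linarith
  refine ⟨c * D, fun z hz => ?_⟩
  have hbound : ∀ x ∈ uD, ‖((D⁻¹ : ℝ) : ℂ) * f x‖ ≤ 1 / finMax a nn L x := by
    intro x hx
    have hw := finMax_pos hG nn hL x hx
    rw [norm_mul, Complex.norm_real, Real.norm_of_nonneg (by positivity), le_div_iff₀ hw]
    by_cases hfx : ‖f x‖ = 0
    · rw [hfx]; simp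
    have hfx' : 0 < ‖f x‖ := lt_of_le_of_ne (norm_nonneg _) (Ne.symm hfx)
    have : finMax a nn L x ≤ D / ‖f x‖ := finMax_le a nn L hL x fun N h1 h2 => by
      rw [le_div_iff₀ hfx']; exact (hC N x hx).trans (hDC N h2)
    rw [le_div_iff₀ hfx'] at this
    calc D⁻¹ * ‖f x‖ * finMax a nn L x = (finMax a nn L x * ‖f x‖) / D := by ring
      _ ≤ 1 := (div_le_one hDpos).2 this
  have hg := le_growth (w := fun x => 1 / finMax a nn L x)
    (g := fun x => ((D⁻¹ : ℝ) : ℂ) * f x) hz (DifferentiableOn.const_mul hfh _) hbound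
  rw [norm_mul, Complex.norm_real, Real.norm_of_nonneg (by positivity)] at hg
  have hgp := growth_pos (finMax_pos hG nn hL) (finMax_nonInc hG nn hL) hz
  have hw1 : assocWeight (finMax a nn L) z * ‖f z‖ ≤ D := by
    unfold assocWeight
    rw [inv_mul_le_iff₀ hgp]
    rw [inv_mul_le_iff₀ hDpos] at hg
    linarith
  calc a M m z * ‖f z‖ ≤ (c * assocWeight (finMax a nn L) z) * ‖f z‖ :=
        mul_le_mul_of_nonneg_right ((le_assoc (hG M m).1 (hG M m).2.1 hz).trans (h z hz))
          (norm_nonneg _)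
    _ = c * (assocWeight (finMax a nn L) z * ‖f z‖) := by ring
    _ ≤ c * D := mul_le_mul_of_nonneg_left hw1 hc.le

theorem B_of_inter {a' A : ℝ} (ha0 : 0 < a') (ha1 : a' < 1) (hA : 1 < A) {a : ℕ → ℕ → ℂ → ℝ}
    (hG : ∀ N n, Good a' A (a N n)) (hMono : MonoSeq a)
    (hI : (⋂ N : ℕ, ⋃ n : ℕ, HaSet (a N n)) ⊆ (⋃ n : ℕ, ⋂ N : ℕ, HaSet (a N n))) :
    CondBTilde a := by
  obtain ⟨B, hB, hcore⟩ := core_bound a' A ha0 ha1 hA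
  by_contra hcon
  unfold CondBTilde at hcon
  push Not at hcon
  obtain ⟨nn, hnn⟩ := hcon
  choose M hM using hnn
  -- the failure of (B), seen along the sequence `rseq`
  have hfreq : ∀ j : ℕ, ∃ᶠ k in Filter.atTop, ((j : ℝ) + 1) * finMax a nn (j + 1) (rseq k : ℂ) <
      a (M j.unpair.1) j.unpair.1 (rseq k : ℂ) := by
    intro j
    have hL : 1 ≤ j + 1 := by omega
    intro hev
    obtain ⟨K, hK⟩ := Filter.eventually_atTop.1 hev
    have hv := hG (M j.unpair.1) j.unpair.1
    obtain ⟨C, hC, hCz⟩ := global_of_tail hA hv.1 hv.2.1 (finMax_pos hG nn hL)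
      (finMax_nonInc hG nn hL) (finMax_log1 hA hG nn hL) (by positivity : (0 : ℝ) < (j : ℝ) + 1) K
      (fun k hk => not_lt.1 (hK k hk))
    obtain ⟨z, hz, hlt⟩ := hM j.unpair.1 (j + 1) hL (4 * A * B * C) (by positivity)
    have h1 := assoc_le a' A B hA hB hcore hv hz
    have h2 := le_assoc (finMax_pos hG nn hL) (finMax_nonInc hG nn hL) hz
    have h3 := mul_le_mul_of_nonneg_left (hCz z hz) (by positivity : 0 ≤ 4 * A * B)
    have h4 := mul_le_mul_of_nonneg_left h2 (by positivity : 0 ≤ 4 * A * B * C)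
    linarith
  obtain ⟨φ, hφ, hφP⟩ := Filter.extraction_forall_of_frequently hfreq
  set c : ℕ → ℝ := fun j => 1 / finMax a nn (j + 1) (rseq (φ j) : ℂ) with hcdef
  have hwpos : ∀ j, 0 < finMax a nn (j + 1) (rseq (φ j) : ℂ) := fun j =>
    finMax_pos hG nn (by omega) _ (rseq_mem _)
  have hcpos : ∀ j, 0 < c j := fun j => by have := hwpos j; simp only [hcdef]; positivity
  -- uniform control of the coefficients
  have hcD : ∀ N, 1 ≤ N → ∃ D, 0 ≤ D ∧ ∀ j, c j * a N (nn N) (rseq (φ j) : ℂ) ≤ D := by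
    intro N hN
    have hterm : ∀ j, 0 ≤ c j * a N (nn N) (rseq (φ j) : ℂ) := fun j =>
      mul_nonneg (hcpos j).le ((hG _ _).1 _ (rseq_mem _)).le
    have hS : 0 ≤ ∑ j ∈ Finset.range N, c j * a N (nn N) (rseq (φ j) : ℂ) :=
      Finset.sum_nonneg fun j _ => hterm j
    refine ⟨1 + ∑ j ∈ Finset.range N, c j * a N (nn N) (rseq (φ j) : ℂ), by linarith, ?_⟩
    intro j
    by_cases hj : j < N
    · have := Finset.single_le_sum (f := fun j => c j * a N (nn N) (rseq (φ j) : ℂ))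
        (fun i _ => hterm i) (Finset.mem_range.2 hj)
      linarith
    · have h1 := le_finMax a nn (j + 1) (rseq (φ j) : ℂ) hN (by omega)
      have h2 : c j * a N (nn N) (rseq (φ j) : ℂ) ≤ 1 := by
        simp only [hcdef]
        rw [one_div_mul_eq_div, div_le_one (hwpos j)]; exact h1
      linarith
  have hnn0 : ∀ (x : ℂ) j, 0 ≤ c j * ‖x‖ ^ lacExp (φ j) := fun x j =>
    mul_nonneg (hcpos j).le (by positivity)
  have hsum : ∀ x ∈ uD, Summable (fun j => c j * ‖x‖ ^ lacExp (φ j)) := by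
    intro x hx
    obtain ⟨D, hD, hcD'⟩ := hcD 1 le_rfl
    refine summable_of_sum_le (c := D * B / a 1 (nn 1) x) (hnn0 x) fun s => ?_
    rw [le_div_iff₀ ((hG _ _).1 x hx), mul_comm]
    exact lac_sum_le hcore (hG 1 (nn 1)) hφ.injective hD hcD' s hx
  set f : ℂ → ℂ := fun z => ∑' j, (c j : ℂ) * z ^ lacExp (φ j) with hfdef
  have hnt : ∀ (x : ℂ) j, ‖(c j : ℂ) * x ^ lacExp (φ j)‖ = c j * ‖x‖ ^ lacExp (φ j) := by
    intro x j
    rw [norm_mul, Complex.norm_real, Real.norm_of_nonneg (hcpos j).le, norm_pow]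
  have hfholo : Holo f := by
    intro z hz
    obtain ⟨k, -, hk⟩ := exists_block ‖z‖ (norm_nonneg z) hz
    have hd : DifferentiableOn ℂ f (Metric.ball 0 (rseq (k + 1))) := by
      refine differentiableOn_tsum_of_summable_norm (hsum _ (rseq_mem (k + 1))) ?_
        Metric.isOpen_ball ?_
      · intro j
        exact ((differentiable_pow _).const_mul _).differentiableOn
      · intro j w hw
        rw [hnt]
        have : ‖w‖ ≤ rseq (k + 1) := by
          have := mem_ball_zero_iff.1 hw
          exact this.le
        rw [norm_rseq]
        exact mul_le_mul_of_nonneg_left (pow_le_pow_left₀ (norm_nonneg _) this _) (hcpos j).le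
    exact (hd.differentiableAt (Metric.isOpen_ball.mem_nhds
      (mem_ball_zero_iff.2 hk))).differentiableWithinAt
  have hfle : ∀ x ∈ uD, ‖f x‖ ≤ ∑' j, c j * ‖x‖ ^ lacExp (φ j) := by
    intro x hx
    have h1 : Summable fun j => ‖(c j : ℂ) * x ^ lacExp (φ j)‖ := by
      simp_rw [hnt]; exact hsum x hx
    have h2 := norm_tsum_le_tsum_norm h1
    simp_rw [hnt] at h2
    exact h2
  have hfN : ∀ N, 1 ≤ N → f ∈ HaSet (a N (nn N)) := by
    intro N hN
    obtain ⟨D, hD, hcD'⟩ := hcD N hN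
    refine ⟨hfholo, D * B, fun z hz => ?_⟩
    have hv := (hG N (nn N)).1 z hz
    have h1 : ∑' j, c j * ‖z‖ ^ lacExp (φ j) ≤ D * B / a N (nn N) z := by
      refine (hsum z hz).tsum_le_of_sum_le fun s => ?_
      rw [le_div_iff₀ hv, mul_comm]
      exact lac_sum_le hcore (hG N (nn N)) hφ.injective hD hcD' s hz
    have h2 := (hfle z hz).trans h1
    rw [le_div_iff₀ hv] at h2
    linarith
  have hmem : f ∈ ⋂ N : ℕ, ⋃ n : ℕ, HaSet (a N n) := by
    simp only [Set.mem_iInter, Set.mem_iUnion]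
    intro N
    rcases Nat.eq_zero_or_pos N with rfl | hN
    · exact ⟨nn 1, Ha_mono (fun z hz => (hMono 0 (nn 1) z hz).2) (hfN 1 le_rfl)⟩
    · exact ⟨nn N, hfN N hN⟩
  have hmem' := hI hmem
  simp only [Set.mem_iInter, Set.mem_iUnion] at hmem'
  obtain ⟨m, hm⟩ := hmem'
  obtain ⟨-, C, hC⟩ := hm (M m)
  obtain ⟨i, hi⟩ := exists_nat_gt (4 * C)
  set j := Nat.pair m i with hj
  have hju : j.unpair.1 = m := by rw [hj, Nat.unpair_pair]
  have hP := hφP j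
  rw [hju] at hP
  have hij : (i : ℝ) ≤ j := by exact_mod_cast Nat.right_le_pair m i
  have hCj := hC _ (rseq_mem (φ j))
  -- lower bound of `f` at `rseq (φ j)`
  have hlow : c j * (1 / 4) ≤ ‖f (rseq (φ j) : ℂ)‖ := by
    have he : f (rseq (φ j) : ℂ) =
        ((∑' i, c i * ‖(rseq (φ j) : ℂ)‖ ^ lacExp (φ i) : ℝ) : ℂ) := by
      rw [Complex.ofReal_tsum]
      simp only [hfdef, norm_rseq]
      push_cast
      rfl
    rw [he, Complex.norm_real, Real.norm_of_nonneg (tsum_nonneg (hnn0 _))]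
    have h1 := (hsum _ (rseq_mem (φ j))).le_tsum j (fun i _ => hnn0 _ i)
    refine le_trans ?_ h1
    rw [norm_rseq]
    exact mul_le_mul_of_nonneg_left (lac_lower _) (hcpos j).le
  have hvpos := (hG (M m) m).1 _ (rseq_mem (φ j))
  have h3 := mul_le_mul_of_nonneg_left hlow hvpos.le
  have h4 : (j : ℝ) + 1 < c j * a (M m) m (rseq (φ j) : ℂ) := by
    simp only [hcdef]
    rw [one_div_mul_eq_div, lt_div_iff₀ (hwpos j)]; exact hP
  linarith

/-- under (LOG), AH(𝔻) = 𝒱H(𝔻) algebraically iff 𝒜 satisfies (B)~. -/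
theorem interchange_iff_condBTilde (a' A : ℝ) (ha0 : 0 < a') (ha1 : a' < 1) (hA : 1 < A)
    (a : ℕ → ℕ → ℂ → ℝ)
    (hW : ∀ N n, IsWeight (a N n)) (hMono : MonoSeq a) (hLOG : SeqLOG a' A a) :
    (⋂ N : ℕ, ⋃ n : ℕ, HaSet (a N n)) = (⋃ n : ℕ, ⋂ N : ℕ, HaSet (a N n)) ↔
      CondBTilde a := by
  have hG : ∀ N n, Good a' A (a N n) := fun N n =>
    ⟨(hW N n).2, (hLOG N n).2.1, (hLOG N n).2.2.2.1, (hLOG N n).2.2.2.2⟩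
  constructor
  · intro h
    exact B_of_inter ha0 ha1 hA hG hMono h.le
  · intro h
    refine Set.Subset.antisymm (inter_of_B hG h) ?_
    intro f hf
    simp only [Set.mem_iInter, Set.mem_iUnion] at hf ⊢
    obtain ⟨n, hn⟩ := hf
    exact fun N => ⟨n, hn N⟩
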